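/- Let q be a prime power and d a positive integer with d ≡ 0 (mod 4) and q+1 ≡ d/2 (mod d). Let ξ be a primitive element of F_{q²}. Let a, b, c ∈ F_{q²} and j ∈ ℤ satisfy a·b ≠ 0, b = ξ^{(q−1)·j·(d/2)}·a^q and a·c^q = b^q·c, and assume b·u ≠ a·v. Let u, v ∈ F_{q²} and the positive integer r satisfy either (u^{q+1} = v^{q+1} and gcd(r, (q²−1)/d) = 1) or (u^{q+1} ≠ v^{q+1} and r = 1). Let e₀, e₁ ∈ F_{q²} and define f(x) = (a·x^q + b·x + c)^r · (e₀ + e₁·(a·x^q + b·x + c)^{(q²−1)/d}) + u·x^q + v·x. Then f is a permutation polynomial of F_{q²} if and only if [(B·e₀ + A^{1−r}·B^{q·r}·e₀^q + u^{q+1} − v^{q+1})² − (B·e₁ + A^{1−r}·B^{q·r}·e₁^q)²]^{(q²−1)/d} = (−1)^{r+1}. -/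

import Mathlib

/-!
Write `σ` for the Frobenius involution `x ↦ x ^ q`. The conditions on `a, b, c` say that, for some
`ρ` with `ρ ^ (2 * (q + 1) / d) = 1`, the affine map `x ↦ a * σ x + b * x + c` sends `F` onto the
eigenspace `S = {y | σ y = ρ * y}`. The map `x ↦ A * σ x + B * x + N * c`, where
`N = u * σ u - v * σ v`, has the same image, and the two intertwine `f` with
`h y = y ^ r * (P + E * y ^ s)`, where `s = (q² - 1) / d`. By the Akbary–Ghioca–Wang criterion, `f`
permutes `F` if and only if `h` permutes `S`. Every nonzero `y ∈ S` satisfies `y ^ s = ±1`, so `h`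
is monomial on each of the two classes `y ^ s = 1` and `y ^ s = -1`, whose values have `s`-th powers
`(P + E) ^ s` and `(-1) ^ r * (P - E) ^ s` respectively. Hence `h` permutes `S` exactly when these
two signs are opposite, that is, when their product is `-1`.
-/

open Function Set

section AGW

variable {X Y : Type*}

variable {f : X → X} {h : Y → Y} {φ ψ : X → Y} {S : Set Y}

theorem mapsTo_of_semiconj (hφ : range φ = S) (hψ : range ψ = S)
    (hcomm : ∀ x, ψ (f x) = h (φ x)) : MapsTo h S S := by
  rw [← hφ]
  rintro _ ⟨x, rfl⟩
  rw [← hcomm, hφ, ← hψ]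
  exact mem_range_self (f x)

theorem bijective_iff_bijOn_of_semiconj [Finite X] (hφ : range φ = S) (hψ : range ψ = S)
    (hcomm : ∀ x, ψ (f x) = h (φ x)) (hfiber : ∀ x x', φ x = φ x' → f x = f x' → x = x') :
    Bijective f ↔ BijOn h S S := by
  have hmaps : MapsTo h S S := mapsTo_of_semiconj hφ hψ hcomm
  have hfin : S.Finite := hφ ▸ finite_range φ
  constructor
  · intro hf
    rw [← hfin.surjOn_iff_bijOn_of_mapsTo hmaps]
    intro z hz
    obtain ⟨w, rfl⟩ := hψ.symm ▸ hz
    obtain ⟨x, rfl⟩ := hf.surjective w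
    exact ⟨φ x, hφ ▸ mem_range_self x, (hcomm x).symm⟩
  · intro hh
    refine Finite.injective_iff_bijective.1 fun x x' hxx' => hfiber x x' ?_ hxx'
    refine hh.injOn (hφ ▸ mem_range_self x) (hφ ▸ mem_range_self x') ?_
    rw [← hcomm, ← hcomm, hxx']

end AGW

section TwoBranchMonomial

variable {K : Type*} [Field K] {r s : ℕ} {P E : K} {S : Set K}

theorem eq_of_pow_eq_pow_of_coprime {x y : K} (hy : y ≠ 0) (hrs : r.Coprime s)
    (hr : x ^ r = y ^ r) (hs : x ^ s = y ^ s) : x = y := by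
  rw [← div_eq_one_iff_eq hy, ← pow_eq_one_iff_of_coprime hrs, div_pow, div_pow, hr, hs]
  exact ⟨div_self (pow_ne_zero r hy), div_self (pow_ne_zero s hy)⟩

theorem sq_sub_sq_pow_eq_neg_one_pow_iff {R : Type*} [CommRing R] (P E : R) (r s : ℕ) :
    (P ^ 2 - E ^ 2) ^ s = (-1) ^ (r + 1) ↔ (P + E) ^ s * ((-1) ^ r * (P - E) ^ s) = -1 := by
  have hsign : (-1 : R) ^ r * (-1) ^ r = 1 := by rw [← mul_pow, neg_mul_neg, one_mul, one_pow]
  rw [sq_sub_sq, mul_pow, pow_succ]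
  constructor <;> intro h
  · linear_combination (-1) ^ r * h - hsign
  · linear_combination (-1) ^ r * h - (P + E) ^ s * (P - E) ^ s * hsign

theorem pow_mul_add_mul_pow_pow {R : Type*} [CommRing R] {y : R} (P E : R) (r s : ℕ)
    (hy : y ^ s = 1 ∨ y ^ s = -1) :
    y ^ s = 1 ∧ (y ^ r * (P + E * y ^ s)) ^ s = (P + E) ^ s ∨
      y ^ s = -1 ∧ (y ^ r * (P + E * y ^ s)) ^ s = (-1) ^ r * (P - E) ^ s := by
  have hpow : (y ^ r * (P + E * y ^ s)) ^ s = (y ^ s) ^ r * (P + E * y ^ s) ^ s := by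
    rw [mul_pow, pow_right_comm]
  rw [hpow]
  refine hy.imp (fun h => ⟨h, ?_⟩) fun h => ⟨h, ?_⟩ <;> rw [h]
  · rw [one_pow, one_mul, mul_one]
  · rw [mul_neg_one, ← sub_eq_add_neg]

theorem add_pow_mul_neg_one_pow_mul_sub_pow_eq_neg_one_of_surjOn (hr : r ≠ 0) (hs : s ≠ 0)
    (hneg_one : (-1 : K) ≠ 1) (hS : ∀ y ∈ S, y ≠ 0 → y ^ s = 1 ∨ y ^ s = -1)
    (hpos : ∃ y ∈ S, y ^ s = 1) (hneg : ∃ y ∈ S, y ^ s = -1)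
    (hsurj : SurjOn (fun y => y ^ r * (P + E * y ^ s)) S S) :
    (P + E) ^ s * ((-1) ^ r * (P - E) ^ s) = -1 := by
  have hvalue : ∀ ε : K, ε ≠ 0 → (∃ z ∈ S, z ^ s = ε) →
      ε = (P + E) ^ s ∨ ε = (-1) ^ r * (P - E) ^ s := by
    rintro ε hε ⟨z, hz, rfl⟩
    obtain ⟨y, hy, rfl⟩ := hsurj hz
    have hy0 : y ≠ 0 := by
      rintro rfl
      exact hε (by simp only [zero_pow hr, zero_mul, zero_pow hs])
    exact (pow_mul_add_mul_pow_pow P E r s (hS y hy hy0)).imp And.right And.right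
  rcases hvalue 1 one_ne_zero hpos with h₁ | h₁ <;>
    rcases hvalue (-1) (neg_ne_zero.2 one_ne_zero) hneg with h₂ | h₂
  · exact absurd (h₂.trans h₁.symm) hneg_one
  · rw [← h₁, ← h₂, one_mul]
  · rw [← h₁, ← h₂, mul_one]
  · exact absurd (h₂.trans h₁.symm) hneg_one

theorem injOn_pow_mul_add_mul_pow (hr : r ≠ 0) (hs : s ≠ 0) (hrs : r.Coprime s)
    (hS : ∀ y ∈ S, y ≠ 0 → y ^ s = 1 ∨ y ^ s = -1)
    (hprod : (P + E) ^ s * ((-1) ^ r * (P - E) ^ s) = -1)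
    (hbranch : (P + E) ^ s ≠ (-1) ^ r * (P - E) ^ s) :
    InjOn (fun y => y ^ r * (P + E * y ^ s)) S := by
  have hprod_ne : (P + E) ^ s * ((-1) ^ r * (P - E) ^ s) ≠ 0 :=
    hprod.trans_ne (neg_ne_zero.2 one_ne_zero)
  have hvalue_ne : ∀ y ∈ S, y ≠ 0 → y ^ r * (P + E * y ^ s) ≠ 0 := by
    intro y hy hy0
    refine ne_zero_pow hs ?_
    rcases pow_mul_add_mul_pow_pow P E r s (hS y hy hy0) with ⟨-, h⟩ | ⟨-, h⟩ <;> rw [h]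
    · exact left_ne_zero_of_mul hprod_ne
    · exact right_ne_zero_of_mul hprod_ne
  have hzero : ∀ y ∈ S, (0 : K) ^ r * (P + E * 0 ^ s) = y ^ r * (P + E * y ^ s) → 0 = y := by
    intro y hy h
    by_contra hy0
    rw [zero_pow hr, zero_mul] at h
    exact hvalue_ne y hy (Ne.symm hy0) h.symm
  intro y hy z hz hyz
  dsimp only at hyz
  rcases eq_or_ne y 0 with rfl | hy0
  · exact hzero z hz hyz
  rcases eq_or_ne z 0 with rfl | hz0
  · exact (hzero y hy hyz.symm).symm
  have hsame : y ^ s = z ^ s := by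
    rcases pow_mul_add_mul_pow_pow P E r s (hS y hy hy0) with ⟨hy1, hyv⟩ | ⟨hy1, hyv⟩ <;>
      rcases pow_mul_add_mul_pow_pow P E r s (hS z hz hz0) with ⟨hz1, hzv⟩ | ⟨hz1, hzv⟩
    · rw [hy1, hz1]
    · exact absurd (by rw [← hyv, hyz, hzv]) hbranch
    · exact absurd (by rw [← hzv, ← hyz, hyv]) hbranch
    · rw [hy1, hz1]
  have hfactor : P + E * z ^ s ≠ 0 := right_ne_zero_of_mul (hvalue_ne z hz hz0)
  rw [hsame] at hyz
  exact eq_of_pow_eq_pow_of_coprime hz0 hrs (mul_right_cancel₀ hfactor hyz) hsame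

theorem bijOn_pow_mul_add_mul_pow_iff (hfin : S.Finite) (hr : r ≠ 0) (hrs : r.Coprime s)
    (hneg_one : (-1 : K) ≠ 1) (hS : ∀ y ∈ S, y ≠ 0 → y ^ s = 1 ∨ y ^ s = -1)
    (hpos : ∃ y ∈ S, y ^ s = 1) (hneg : ∃ y ∈ S, y ^ s = -1)
    (hmaps : MapsTo (fun y => y ^ r * (P + E * y ^ s)) S S) :
    BijOn (fun y => y ^ r * (P + E * y ^ s)) S S ↔
      (P ^ 2 - E ^ 2) ^ s = (-1) ^ (r + 1) := by
  obtain ⟨y, hy, hys⟩ := hpos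
  have hs : s ≠ 0 := by
    rintro rfl
    obtain ⟨z, -, hz⟩ := hneg
    exact hneg_one (hz.symm.trans (pow_zero z))
  rw [sq_sub_sq_pow_eq_neg_one_pow_iff]
  refine ⟨fun h => add_pow_mul_neg_one_pow_mul_sub_pow_eq_neg_one_of_surjOn hr hs hneg_one hS
    ⟨y, hy, hys⟩ hneg h.surjOn, fun hprod => ?_⟩
  rw [← hfin.injOn_iff_bijOn_of_mapsTo hmaps]
  refine injOn_pow_mul_add_mul_pow hr hs hrs hS hprod fun hbranch => ?_
  have hvalue : y ^ r * (P + E * y ^ s) = y ^ r * (P + E) := by rw [hys, mul_one]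
  have hPE : (P + E) ^ s = 1 ∨ (P + E) ^ s = -1 := by
    have hpow : (y ^ r * (P + E * y ^ s)) ^ s = (P + E) ^ s := by
      rw [hvalue, mul_pow, pow_right_comm, hys, one_pow, one_mul]
    rw [← hpow]
    refine hS _ (hmaps hy) fun h0 => ?_
    rw [← hpow, h0, zero_pow hs, zero_mul] at hprod
    exact neg_ne_zero.2 one_ne_zero hprod.symm
  rw [← hbranch, mul_self_eq_one_iff.2 hPE] at hprod
  exact hneg_one hprod.symm

end TwoBranchMonomial

section TwistedTrace

variable {R : Type*} [CommRing R]

/-- The eigenspace of the ring endomorphism `σ` for `ρ`, as an additive subgroup. -/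
def eigenAddSubgroup (σ : R →+* R) (ρ : R) : AddSubgroup R :=
  σ.toAddMonoidHom.eqLocus (AddMonoidHom.mulLeft ρ)

theorem mem_eigenAddSubgroup {σ : R →+* R} {ρ y : R} :
    y ∈ eigenAddSubgroup σ ρ ↔ σ y = ρ * y :=
  Iff.rfl

/-- The additive map `x ↦ a * σ x + b * x`. For an involution `σ` and `a = b = 1` it is the trace
to the fixed ring of `σ`. -/
def twistedTrace (σ : R →+* R) (a b : R) : R →+ R :=
  (AddMonoidHom.mulLeft a).comp σ.toAddMonoidHom + AddMonoidHom.mulLeft b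

theorem twistedTrace_apply (σ : R →+* R) (a b x : R) :
    twistedTrace σ a b x = a * σ x + b * x :=
  rfl

/-- The endomorphism `σ` exchanges `a` and `b` up to the factor `ρ`. When `σ` is an involution, this
is what makes `twistedTrace σ a b` take values in `eigenAddSubgroup σ ρ`. -/
structure SwapsUpTo (σ : R →+* R) (ρ a b : R) : Prop where
  map_left : σ a = ρ * b
  map_right : σ b = ρ * a

variable {σ : R →+* R} {ρ a b u v : R}

theorem swapsUpTo_of_eq_mul_map (hσ : Involutive σ) {ζ : R} (hζ : ζ * σ ζ = 1)
    (hb : b = ζ * σ a) : SwapsUpTo σ (σ ζ) a b where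
  map_left := by rw [hb]; linear_combination -σ a * hζ
  map_right := by rw [hb, map_mul, hσ]

theorem SwapsUpTo.cross (hσ : Involutive σ) (hab : SwapsUpTo σ ρ a b) (u v : R) :
    SwapsUpTo σ ρ (b * u - a * v) (a * σ u - b * σ v) where
  map_left := by rw [map_sub, map_mul, map_mul, hab.map_left, hab.map_right]; ring
  map_right := by rw [map_sub, map_mul, map_mul, hσ, hσ, hab.map_left, hab.map_right]; ring

theorem SwapsUpTo.twistedTrace_mem (hσ : Involutive σ) (hab : SwapsUpTo σ ρ a b) (x : R) :
    twistedTrace σ a b x ∈ eigenAddSubgroup σ ρ := by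
  rw [mem_eigenAddSubgroup, twistedTrace_apply, map_add, map_mul, map_mul, hσ, hab.map_left,
    hab.map_right]
  ring

theorem twistedTrace_cross_twistedTrace (hσ : Involutive σ) (a b u v x : R) :
    twistedTrace σ (b * u - a * v) (a * σ u - b * σ v) (twistedTrace σ u v x) =
      (σ u * u - σ v * v) * twistedTrace σ a b x := by
  simp only [twistedTrace_apply, map_add, map_mul, hσ x]
  ring

theorem eq_of_twistedTrace_eq_of_twistedTrace_eq [IsDomain R] {x x' : R} (h : b * u - a * v ≠ 0)
    (hab : twistedTrace σ a b x = twistedTrace σ a b x')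
    (huv : twistedTrace σ u v x = twistedTrace σ u v x') : x = x' := by
  simp only [twistedTrace_apply] at hab huv
  exact mul_left_cancel₀ h (by linear_combination u * hab - a * huv)

theorem twistedTrace_pow_mul {r s : ℕ} (hr : r ≠ 0) {y : R} (hy : σ y = ρ * y)
    (hys : y ≠ 0 → y ^ s = 1 ∨ y ^ s = -1) (A B e₀ e₁ : R) :
    twistedTrace σ A B (y ^ r * (e₀ + e₁ * y ^ s)) =
      y ^ r * (twistedTrace σ (A * ρ ^ r) B e₀ + twistedTrace σ (A * ρ ^ r) B e₁ * y ^ s) := by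
  have hfixed : y ^ r * σ (y ^ s) = y ^ r * y ^ s := by
    rcases eq_or_ne y 0 with rfl | hy0
    · rw [zero_pow hr, zero_mul, zero_mul]
    · rcases hys hy0 with h | h <;> rw [h]
      · rw [map_one]
      · rw [map_neg, map_one]
  simp only [twistedTrace_apply, map_mul, map_add, map_pow, hy, mul_pow] at hfixed ⊢
  linear_combination A * ρ ^ r * σ e₁ * hfixed

theorem twistedTrace_semiconj (hσ : Involutive σ) {c x y A B N : R} {r s : ℕ}
    (hA : A = b * u - a * v) (hB : B = a * σ u - b * σ v) (hN : N = σ u * u - σ v * v)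
    (hNr : N = 0 ∨ r = 1) (hr : r ≠ 0) (hxy : twistedTrace σ a b x + c = y) (hy : σ y = ρ * y)
    (hys : y ≠ 0 → y ^ s = 1 ∨ y ^ s = -1) (e₀ e₁ : R) :
    twistedTrace σ A B (y ^ r * (e₀ + e₁ * y ^ s) + twistedTrace σ u v x) + N * c =
      y ^ r * (twistedTrace σ (A * ρ ^ r) B e₀ + N +
        twistedTrace σ (A * ρ ^ r) B e₁ * y ^ s) := by
  have hlinear : twistedTrace σ A B (twistedTrace σ u v x) = N * twistedTrace σ a b x := by
    rw [hA, hB, hN, twistedTrace_cross_twistedTrace hσ]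
  have hNy : N * y = N * y ^ r := by
    rcases hNr with h | h <;> rw [h]
    · rw [zero_mul, zero_mul]
    · rw [pow_one]
  rw [map_add, twistedTrace_pow_mul hr hy hys, hlinear]
  linear_combination hNy + N * hxy

end TwistedTrace

section Field

theorem range_add_const_of_mem_range {G H : Type*} [AddGroup G] [AddGroup H] (φ : G →+ H) {c : H}
    (hc : c ∈ φ.range) : range (fun x => φ x + c) = φ.range := by
  ext y
  refine ⟨?_, fun hy => ?_⟩
  · rintro ⟨x, rfl⟩
    exact add_mem ⟨x, rfl⟩ hc
  · obtain ⟨x, hx⟩ := sub_mem hy hc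
    exact ⟨x, by simp only [hx, sub_add_cancel]⟩

variable {K : Type*} [Field K] {σ : K →+* K} {ρ a b c u v A B N e₀ e₁ : K} {r s : ℕ}
  {f : K → K}

theorem twistedTrace_ne_zero (hid : σ ≠ RingHom.id K) (ha : a ≠ 0) : twistedTrace σ a b ≠ 0 := by
  intro h
  refine hid (RingHom.ext fun x => mul_left_cancel₀ ha ?_)
  have hx := DFunLike.congr_fun h x
  have h1 := DFunLike.congr_fun h 1
  simp only [twistedTrace_apply, map_one, AddMonoidHom.zero_apply] at hx h1
  rw [RingHom.id_apply]
  linear_combination hx - x * h1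

theorem SwapsUpTo.ne_zero (hab : SwapsUpTo σ ρ a b) (ha : a ≠ 0) : ρ ≠ 0 :=
  left_ne_zero_of_mul (hab.map_left ▸ (map_ne_zero σ).2 ha)

theorem SwapsUpTo.range_twistedTrace (hσ : Involutive σ) (hid : σ ≠ RingHom.id K)
    (hab : SwapsUpTo σ ρ a b) (ha : a ≠ 0) :
    (twistedTrace σ a b).range = eigenAddSubgroup σ ρ := by
  refine le_antisymm (by rintro _ ⟨x, rfl⟩; exact hab.twistedTrace_mem hσ x) fun y hy => ?_
  obtain ⟨x, hx⟩ := DFunLike.ne_iff.1 (twistedTrace_ne_zero (b := b) hid ha)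
  set z := twistedTrace σ a b x with hz
  -- `twistedTrace σ a b` is linear over the fixed field of `σ`, which contains `y / z`.
  have hσz : σ z = ρ * z := hab.twistedTrace_mem hσ x
  have hfixed : σ (y / z) = y / z := by
    rw [map_div₀, mem_eigenAddSubgroup.1 hy, hσz, mul_div_mul_left _ _ (hab.ne_zero ha)]
  refine ⟨y / z * x, ?_⟩
  calc twistedTrace σ a b (y / z * x) = y / z * z := by
        rw [hz, twistedTrace_apply, map_mul, ← hz, hfixed, hz, twistedTrace_apply]; ring
    _ = y := div_mul_cancel₀ y hx

theorem SwapsUpTo.range_twistedTrace_add (hσ : Involutive σ) (hid : σ ≠ RingHom.id K)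
    (hab : SwapsUpTo σ ρ a b) (ha : a ≠ 0) (hc : c ∈ eigenAddSubgroup σ ρ) :
    range (fun x => twistedTrace σ a b x + c) = eigenAddSubgroup σ ρ := by
  rw [← hab.range_twistedTrace hσ hid ha] at hc ⊢
  exact range_add_const_of_mem_range _ hc

theorem SwapsUpTo.mem_eigenAddSubgroup_of_mul_map_eq (hab : SwapsUpTo σ ρ a b) (ha : a ≠ 0)
    (hc : a * σ c = σ b * c) : c ∈ eigenAddSubgroup σ ρ :=
  mul_left_cancel₀ ha (hc.trans (by rw [hab.map_right, mul_comm ρ, mul_assoc]; rfl))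

theorem SwapsUpTo.mul_inv_pow_mul_map_pow (hab : SwapsUpTo σ ρ a b) (ha : a ≠ 0) (r : ℕ) :
    a * (a ^ r)⁻¹ * σ b ^ r = a * ρ ^ r := by
  rw [hab.map_right, mul_pow, mul_assoc, mul_comm (ρ ^ r), inv_mul_cancel_left₀ (pow_ne_zero r ha)]

theorem exists_mem_pow_eq_one_and_exists_mem_pow_eq_neg_one {y η : K}
    (hy : y ∈ eigenAddSubgroup σ ρ) (hys : y ^ s = 1 ∨ y ^ s = -1) (hση : σ η = η)
    (hηs : η ^ s = -1) :
    (∃ z ∈ eigenAddSubgroup σ ρ, z ^ s = 1) ∧ ∃ z ∈ eigenAddSubgroup σ ρ, z ^ s = -1 := by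
  have hyη : y * η ∈ eigenAddSubgroup σ ρ := by
    rw [mem_eigenAddSubgroup, map_mul, mem_eigenAddSubgroup.1 hy, hση, mul_assoc]
  have hyηs : (y * η) ^ s = -y ^ s := by rw [mul_pow, hηs, mul_neg_one]
  rcases hys with h | h
  · exact ⟨⟨y, hy, h⟩, y * η, hyη, by rw [hyηs, h]⟩
  · exact ⟨⟨y * η, hyη, by rw [hyηs, h, neg_neg]⟩, y, hy, h⟩

theorem SwapsUpTo.bijective_iff_sq_sub_sq_pow_eq [Finite K] (hσ : Involutive σ)
    (hid : σ ≠ RingHom.id K) (hab : SwapsUpTo σ ρ a b) (ha : a ≠ 0)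
    (hc : c ∈ eigenAddSubgroup σ ρ) (hr : r ≠ 0) (hrs : r.Coprime s) (hneg_one : (-1 : K) ≠ 1)
    (hS : ∀ y ∈ eigenAddSubgroup σ ρ, y ≠ 0 → y ^ s = 1 ∨ y ^ s = -1)
    (hη : ∃ η, σ η = η ∧ η ^ s = -1) (hA : A = b * u - a * v) (hA0 : A ≠ 0)
    (hB : B = a * σ u - b * σ v) (hN : N = σ u * u - σ v * v) (hNr : N = 0 ∨ r = 1)
    (hf : ∀ x, f x = (twistedTrace σ a b x + c) ^ r *
      (e₀ + e₁ * (twistedTrace σ a b x + c) ^ s) + twistedTrace σ u v x) :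
    Bijective f ↔
      ((twistedTrace σ (A * ρ ^ r) B e₀ + N) ^ 2 - twistedTrace σ (A * ρ ^ r) B e₁ ^ 2) ^ s =
        (-1) ^ (r + 1) := by
  have hAB : SwapsUpTo σ ρ A B := hA ▸ hB ▸ hab.cross hσ u v
  have hNc : N * c ∈ eigenAddSubgroup σ ρ := by
    rw [mem_eigenAddSubgroup, hN, map_mul, map_sub, map_mul, map_mul, hσ, hσ,
      mem_eigenAddSubgroup.1 hc]
    ring
  have hφ := hab.range_twistedTrace_add hσ hid ha hc
  have hψ := hAB.range_twistedTrace_add hσ hid hA0 hNc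
  set h : K → K := fun y => y ^ r * (twistedTrace σ (A * ρ ^ r) B e₀ + N +
    twistedTrace σ (A * ρ ^ r) B e₁ * y ^ s)
  have hcomm (x : K) : twistedTrace σ A B (f x) + N * c = h (twistedTrace σ a b x + c) := by
    have hx : twistedTrace σ a b x + c ∈ eigenAddSubgroup σ ρ :=
      add_mem (hab.twistedTrace_mem hσ x) hc
    exact hf x ▸ twistedTrace_semiconj hσ hA hB hN hNr hr rfl hx (hS _ hx) e₀ e₁
  obtain ⟨x, hx⟩ := DFunLike.ne_iff.1 (twistedTrace_ne_zero (b := b) hid ha)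
  have hxS := hab.twistedTrace_mem hσ x
  obtain ⟨η, hση, hηs⟩ := hη
  obtain ⟨hpos, hneg⟩ :=
    exists_mem_pow_eq_one_and_exists_mem_pow_eq_neg_one hxS (hS _ hxS hx) hση hηs
  rw [bijective_iff_bijOn_of_semiconj hφ hψ hcomm fun x x' hxx' hfxx' => ?_]
  · exact bijOn_pow_mul_add_mul_pow_iff (toFinite _) hr hrs hneg_one hS hpos hneg
      (mapsTo_of_semiconj hφ hψ hcomm)
  · rw [hf, hf, hxx', add_right_inj] at hfxx'
    exact eq_of_twistedTrace_eq_of_twistedTrace_eq (hA ▸ hA0) (add_right_cancel hxx') hfxx'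

end Field

section Frobenius

theorem exists_involutive_ringHom_eq_pow {F : Type*} [Field F] [Fintype F] {q : ℕ}
    (hq : IsPrimePow q) (hF : Fintype.card F = q ^ 2) :
    ∃ σ : F →+* F, Involutive σ ∧ ∀ x, σ x = x ^ q := by
  obtain ⟨p, k, hp, -, rfl⟩ := hq
  have : Fact p.Prime := ⟨hp.nat_prime⟩
  have : CharP F p := charP_of_card_eq_prime_pow (f := k * 2) (by rw [hF, pow_mul])
  refine ⟨iterateFrobenius F p k, fun x => ?_, iterateFrobenius_def p k⟩
  rw [iterateFrobenius_def, iterateFrobenius_def, ← pow_mul, ← sq, ← hF, FiniteField.pow_card]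

theorem neg_one_ne_one_of_odd_card {F : Type*} [Field F] [Fintype F]
    (hF : Odd (Fintype.card F)) : (-1 : F) ≠ 1 := by
  refine Ring.neg_one_ne_one_of_char_ne_two fun h => ?_
  rw [FiniteField.even_card_iff_char_two, ← Nat.even_iff] at h
  exact Nat.not_even_iff_odd.2 hF h

theorem exists_odd_and_sq_sub_one_div_eq {q d : ℕ} (hd4 : d % 4 = 0)
    (hqd : (q + 1) % d = d / 2) :
    ∃ n m, Odd m ∧ q = 2 * n + 1 ∧ q + 1 = d / 2 * m ∧ (q ^ 2 - 1) / d = n * m := by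
  have hd : d = d / 2 * 2 := by omega
  have hd0 : 0 < d := by
    rcases Nat.eq_zero_or_pos d with rfl | h
    · rw [Nat.mod_zero] at hqd; omega
    · exact h
  obtain ⟨m, hm, hqm⟩ : ∃ m, Odd m ∧ q + 1 = d / 2 * m := by
    refine ⟨2 * ((q + 1) / d) + 1, odd_two_mul_add_one _, ?_⟩
    calc q + 1 = d * ((q + 1) / d) + d / 2 := by rw [← hqd, Nat.div_add_mod]
      _ = d / 2 * 2 * ((q + 1) / d) + d / 2 := by rw [← hd]
      _ = d / 2 * (2 * ((q + 1) / d) + 1) := by ring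
  obtain ⟨n, hn⟩ : Odd q := by
    have h : Even (q + 1) := by rw [hqm, Nat.even_mul]; left; rw [Nat.even_iff]; omega
    rwa [Nat.even_add_one, Nat.not_even_iff_odd] at h
  refine ⟨n, m, hm, hn, hqm, Nat.div_eq_of_eq_mul_right hd0 ?_⟩
  calc q ^ 2 - 1 = (q + 1) * (q - 1) := Nat.sq_sub_sq q 1
    _ = d / 2 * m * (2 * n) := by rw [hqm, hn, Nat.add_sub_cancel]
    _ = d / 2 * 2 * (n * m) := by ring
    _ = d * (n * m) := by rw [← hd]

variable {K : Type*} [Field K] {σ : K →+* K} {q n m : ℕ} {ξ : K}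

theorem ne_id_of_isPrimitiveRoot (hσq : ∀ x, σ x = x ^ q) (hq : 1 < q)
    (hξ : IsPrimitiveRoot ξ (q ^ 2 - 1)) : σ ≠ RingHom.id K := by
  rintro rfl
  have hlt : q + 1 < q ^ 2 := by nlinarith
  have hq1 : q = 1 := hξ.pow_inj (by omega) (by omega) ((hσq ξ).symm.trans (pow_one ξ).symm)
  exact hq.ne' hq1

theorem pow_eq_one_or_eq_neg_one_of_mem_eigenAddSubgroup (hσq : ∀ x, σ x = x ^ q)
    (hqn : q = 2 * n + 1) {ρ : K} (hρ : ρ ^ m = 1) :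
    ∀ y ∈ eigenAddSubgroup σ ρ, y ≠ 0 → y ^ (n * m) = 1 ∨ y ^ (n * m) = -1 := by
  intro y hy hy0
  rw [mem_eigenAddSubgroup, hσq, hqn, pow_succ] at hy
  rw [← sq_eq_one_iff, ← pow_mul, show n * m * 2 = 2 * n * m by ring, pow_mul,
    mul_right_cancel₀ hy0 hy, hρ]

theorem exists_fixed_pow_mul_eq_neg_one (hσ : Involutive σ) (hσq : ∀ x, σ x = x ^ q) (hq : 1 < q)
    (hqn : q = 2 * n + 1) (hm : Odd m) (hξ : IsPrimitiveRoot ξ (q ^ 2 - 1)) :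
    ∃ η, σ η = η ∧ η ^ (n * m) = -1 := by
  refine ⟨σ ξ * ξ, by rw [map_mul, hσ, mul_comm], ?_⟩
  have hq2 : q ^ 2 - 1 = (q + 1) * n * 2 := by
    rw [show q ^ 2 - 1 = (q + 1) * (q - 1) from Nat.sq_sub_sq q 1, hqn, Nat.add_sub_cancel]
    ring
  have hpos : 0 < q ^ 2 - 1 := Nat.sub_pos_of_lt (Nat.one_lt_pow two_ne_zero hq)
  have hhalf : ξ ^ ((q + 1) * n) = -1 := (hξ.pow hpos hq2).eq_neg_one_of_two_right
  rw [hσq, ← pow_succ, ← pow_mul, ← mul_assoc, pow_mul, hhalf, hm.neg_one_pow]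

theorem exists_pow_eq_one_and_swapsUpTo (hσ : Involutive σ) (hσq : ∀ x, σ x = x ^ q)
    (hq : 0 < q) {e : ℕ} (hqm : q + 1 = e * m) {a b : K}
    (hξ : ξ ^ (q ^ 2 - 1) = 1) {j : ℤ} (hb : b = ξ ^ (((q : ℤ) - 1) * j * e) * a ^ q) :
    ∃ ρ, ρ ^ m = 1 ∧ SwapsUpTo σ ρ a b := by
  set ζ := ξ ^ (((q : ℤ) - 1) * j * e) with hζ
  have hζm : ζ ^ m = 1 := by
    have hexp : ((q : ℤ) - 1) * j * e * m = ((q ^ 2 - 1 : ℕ) : ℤ) * j := by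
      rw [show q ^ 2 - 1 = (q + 1) * (q - 1) from Nat.sq_sub_sq q 1, hqm]
      push_cast [Nat.cast_sub hq]
      ring
    rw [hζ, ← zpow_natCast, ← zpow_mul, hexp, zpow_mul, zpow_natCast, hξ, one_zpow]
  have hζσ : ζ * σ ζ = 1 := by
    rw [hσq, ← pow_succ', hqm, mul_comm, pow_mul, hζm, one_pow]
  exact ⟨σ ζ, by rw [← map_pow, hζm, map_one],
    swapsUpTo_of_eq_mul_map hσ hζσ (by rw [hσq, hb])⟩

end Frobenius

theorem stmt_12 {F : Type*} [Field F] [Fintype F]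
    (q : ℕ) (hq : IsPrimePow q) (hF : Fintype.card F = q ^ 2)
    (d : ℕ) (hd0 : 0 < d) (hd4 : d % 4 = 0) (hqd : (q + 1) % d = d / 2)
    (ξ : F) (hξ : orderOf ξ = q ^ 2 - 1)
    (a b c u v : F) (j : ℤ) (hab : a * b ≠ 0)
    (hb : b = ξ ^ (((q : ℤ) - 1) * j * ((d / 2 : ℕ) : ℤ)) * a ^ q)
    (hac : a * c ^ q = b ^ q * c)
    (hA0 : b * u ≠ a * v)
    (r : ℕ) (hr : 0 < r)
    (huvr : (u ^ (q + 1) = v ^ (q + 1) ∧ Nat.gcd r ((q ^ 2 - 1) / d) = 1) ∨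
      (u ^ (q + 1) ≠ v ^ (q + 1) ∧ r = 1))
    (e₀ e₁ : F)
    (A B : F) (hA : A = b * u - a * v) (hB : B = a * u ^ q - b * v ^ q)
    (f : F → F)
    (hf : f = fun x => (a * x ^ q + b * x + c) ^ r *
      (e₀ + e₁ * (a * x ^ q + b * x + c) ^ ((q ^ 2 - 1) / d)) + u * x ^ q + v * x) :
    Function.Bijective f ↔
      ((B * e₀ + A * (A ^ r)⁻¹ * B ^ (q * r) * e₀ ^ q + u ^ (q + 1) - v ^ (q + 1)) ^ 2 -
        (B * e₁ + A * (A ^ r)⁻¹ * B ^ (q * r) * e₁ ^ q) ^ 2) ^ ((q ^ 2 - 1) / d) =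
      (-1 : F) ^ (r + 1) := by
  obtain ⟨n, m, hm, hqn, hqm, hs⟩ := exists_odd_and_sq_sub_one_div_eq hd4 hqd
  obtain ⟨σ, hσ, hσq⟩ := exists_involutive_ringHom_eq_pow hq hF
  have hξprim : IsPrimitiveRoot ξ (q ^ 2 - 1) := hξ ▸ IsPrimitiveRoot.orderOf ξ
  have hid : σ ≠ RingHom.id F := ne_id_of_isPrimitiveRoot hσq hq.one_lt hξprim
  have hneg_one : (-1 : F) ≠ 1 := neg_one_ne_one_of_odd_card (hF ▸ Odd.pow ⟨n, hqn⟩)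
  obtain ⟨ρ, hρ, hswap⟩ :=
    exists_pow_eq_one_and_swapsUpTo hσ hσq hq.pos hqm hξprim.pow_eq_one hb
  have hS := pow_eq_one_or_eq_neg_one_of_mem_eigenAddSubgroup hσq hqn hρ
  have hη := exists_fixed_pow_mul_eq_neg_one hσ hσq hq.one_lt hqn hm hξprim
  simp only [hs, pow_succ _ q, pow_mul B q, ← hσq] at hac huvr hf hB ⊢
  have ha : a ≠ 0 := left_ne_zero_of_mul hab
  have hAne : A ≠ 0 := hA ▸ sub_ne_zero.2 hA0
  have hc := hswap.mem_eigenAddSubgroup_of_mul_map_eq ha hac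
  have hAB : SwapsUpTo σ ρ A B := hA ▸ hB ▸ hswap.cross hσ u v
  have hrs : r.Coprime (n * m) := huvr.elim And.right fun h => h.2 ▸ Nat.coprime_one_left _
  have hNr : σ u * u - σ v * v = 0 ∨ r = 1 := huvr.imp (sub_eq_zero.2 ·.1) And.right
  rw [hswap.bijective_iff_sq_sub_sq_pow_eq hσ hid ha hc hr.ne' hrs hneg_one hS hη hA hAne hB rfl
    hNr (e₀ := e₀) (e₁ := e₁) fun x => (congrFun hf x).trans (add_assoc _ _ _)]
  simp only [twistedTrace_apply, hAB.mul_inv_pow_mul_map_pow hAne, add_comm (B * _), add_sub_assoc]
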